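/- arXiv:2601.03433 — 2 statements merged into one kernel-verified Lean document; each statement's English description precedes it below -/
import Mathlib

section
/- Let s ≥ 1 be an integer and let G be a finite simple graph on n vertices whose average degree d = 2m/n (where m is the number of edges) satisfies d ≥ (1 − 1/(2s))·n. Then D_s(G) ≤ (n − d) · n · d^{2s}. -/
open Finset SimpleGraph
open scoped Classical

/-- `Dstar s G` is the number of ordered `(2s+2)`-tuples
`(v₁,…,v_s, v, u, u₁,…,u_s)` of pairwise distinct vertices of `G` such that
`v vᵢ` and `u uⱼ` are edges for all `i, j`, and `uv` is not an edge
(labeled copies of the alternating double star `D(s)`). -/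
noncomputable def Dstar (s : ℕ) {n : ℕ} (G : SimpleGraph (Fin n)) : ℕ :=
  Finset.card <|
    (Finset.univ : Finset ((Fin s → Fin n) × Fin n × Fin n × (Fin s → Fin n))).filter
      fun p =>
        (Function.Injective fun i : Fin s ⊕ Fin 2 ⊕ Fin s =>
          Sum.elim p.1
            (Sum.elim (fun j : Fin 2 => if j = 0 then p.2.1 else p.2.2.1) p.2.2.2) i) ∧
        (∀ i, G.Adj p.2.1 (p.1 i)) ∧ (∀ j, G.Adj p.2.2.1 (p.2.2.2 j)) ∧
        ¬ G.Adj p.2.1 p.2.2.1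

lemma aux_Q (x d : ℝ) (hx : 0 ≤ x) (hd : 0 ≤ d) (m : ℕ) :
    0 ≤ (m : ℝ) * x ^ (m + 1) - (m + 1) * d * x ^ m + d ^ (m + 1) := by
  induction m with
  | zero => simp
  | succ m ih =>
    have h1 := mul_nonneg hd ih
    have h2 : 0 ≤ ((m : ℝ) + 1) * x ^ m * (x - d) ^ 2 := by positivity
    push_cast
    have e : ((m : ℝ) + 1) * x ^ (m + 1 + 1) - (m + 1 + 1) * d * x ^ (m + 1) + d ^ (m + 1 + 1)
      = d * ((m : ℝ) * x ^ (m + 1) - (m + 1) * d * x ^ m + d ^ (m + 1))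
        + ((m : ℝ) + 1) * x ^ m * (x - d) ^ 2 := by ring
    rw [e]; positivity

lemma aux_P (x d : ℝ) (hx : 0 ≤ x) (hd : 0 ≤ d) (m : ℕ) :
    0 ≤ x ^ (m + 1) - (m + 1) * d ^ m * x + m * d ^ (m + 1) := by
  induction m with
  | zero => simp
  | succ m ih =>
    have h1 := mul_nonneg hx ih
    have h2 : 0 ≤ ((m : ℝ) + 1) * d ^ m * (x - d) ^ 2 := by positivity
    push_cast
    have e : x ^ (m + 1 + 1) - ((m : ℝ) + 1 + 1) * d ^ (m + 1) * x + (m + 1) * d ^ (m + 1 + 1)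
      = x * (x ^ (m + 1) - (m + 1) * d ^ m * x + m * d ^ (m + 1))
        + ((m : ℝ) + 1) * d ^ m * (x - d) ^ 2 := by ring
    rw [e]; positivity

/-- The tangent line inequality for `(N - x) x ^ (m+1)`. -/
lemma aux_tangent (x d N : ℝ) (hx : 0 ≤ x) (hd : 0 ≤ d) (m : ℕ) (hm : 1 ≤ m)
    (hN : m * N ≤ (m + 1) * d) :
    (N - x) * x ^ (m + 1) ≤ (N - d) * d ^ (m + 1)
      + ((m + 1) * N * d ^ m - (m + 2) * d ^ (m + 1)) * (x - d) := by
  have hm' : (0 : ℝ) < m := by exact_mod_cast hm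
  have hP := aux_P x d hx hd m
  have hQ := mul_nonneg hx (aux_Q x d hx hd m)
  have h1 := mul_nonneg (sub_nonneg.2 hN) hP
  have key : 0 ≤ (m : ℝ) * ((N - d) * d ^ (m + 1)
      + ((m + 1) * N * d ^ m - (m + 2) * d ^ (m + 1)) * (x - d) - (N - x) * x ^ (m + 1)) := by
    have e : (m : ℝ) * ((N - d) * d ^ (m + 1)
      + ((m + 1) * N * d ^ m - (m + 2) * d ^ (m + 1)) * (x - d) - (N - x) * x ^ (m + 1))
      = x * ((m : ℝ) * x ^ (m + 1) - (m + 1) * d * x ^ m + d ^ (m + 1))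
       + ((m + 1) * d - m * N) * (x ^ (m + 1) - (m + 1) * d ^ m * x + m * d ^ (m + 1)) := by ring
    rw [e]; positivity
  have := nonneg_of_mul_nonneg_right key hm'
  linarith

lemma aux_count (s n : ℕ) (G : SimpleGraph (Fin n)) :
    Dstar s G ≤ ∑ v, ∑ u, if G.Adj v u then 0 else G.degree v ^ s * G.degree u ^ s := by
  have h : Dstar s G ≤ (((univ : Finset (Fin n × Fin n)).filter
      fun q => ¬ G.Adj q.1 q.2).sigma fun q =>
        (Fintype.piFinset fun _ : Fin s => G.neighborFinset q.1) ×ˢ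
        (Fintype.piFinset fun _ : Fin s => G.neighborFinset q.2)).card := by
    unfold Dstar
    apply Finset.card_le_card_of_injOn
      (fun p => (⟨(p.2.1, p.2.2.1), (p.1, p.2.2.2)⟩ :
        Σ _ : Fin n × Fin n, (Fin s → Fin n) × (Fin s → Fin n)))
    · intro p hp
      simp only [coe_filter, mem_univ, true_and, Set.mem_ofPred_eq] at hp
      simp only [coe_sigma, Set.mem_sigma_iff, mem_coe, mem_filter, mem_univ, true_and,
        mem_product, Fintype.mem_piFinset, mem_neighborFinset]
      exact ⟨hp.2.2.2, hp.2.1, hp.2.2.1⟩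
    · rintro ⟨a, b, c, e⟩ _ ⟨a', b', c', e'⟩ _ h
      simp only [Sigma.mk.injEq, Prod.mk.injEq, heq_eq_eq] at h
      obtain ⟨⟨rfl, rfl⟩, rfl, rfl⟩ := h
      rfl
  refine h.trans (le_of_eq ?_)
  rw [card_sigma, sum_filter, Fintype.sum_prod_type]
  refine sum_congr rfl fun v _ => sum_congr rfl fun u _ => ?_
  by_cases hvu : G.Adj v u <;> simp [hvu]

lemma aux_bound (s n : ℕ) (G : SimpleGraph (Fin n)) :
    (Dstar s G : ℝ) ≤ ∑ v, ((n : ℝ) - G.degree v) * (G.degree v : ℝ) ^ (2 * s) := by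
  have h : (Dstar s G : ℝ) ≤ ∑ v, ∑ u, if G.Adj v u then (0 : ℝ) else
      (G.degree v : ℝ) ^ s * (G.degree u : ℝ) ^ s := by
    have := (Nat.cast_le (α := ℝ)).2 (aux_count s n G)
    push_cast at this
    exact this
  let A : Fin n → Fin n → ℝ := fun v u => if G.Adj v u then 0 else (G.degree v : ℝ) ^ (2 * s)
  have hA : ∀ v, ∑ u, A v u = ((n : ℝ) - G.degree v) * (G.degree v : ℝ) ^ (2 * s) := by
    intro v
    have e : ∀ u, A v u = (G.degree v : ℝ) ^ (2 * s)
        - (if G.Adj v u then (G.degree v : ℝ) ^ (2 * s) else 0) := by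
      intro u; by_cases hvu : G.Adj v u <;> simp [A, hvu]
    have hc : ((univ : Finset (Fin n)).filter fun u => G.Adj v u).card = G.degree v := by
      rw [← card_neighborFinset_eq_degree]; congr 1; ext u; simp
    simp only [e]
    rw [sum_sub_distrib, ← sum_filter, sum_const, sum_const, hc]
    simp [sub_mul]
  have h2 : (∑ v, ∑ u, if G.Adj v u then (0 : ℝ) else
      (G.degree v : ℝ) ^ s * (G.degree u : ℝ) ^ s) ≤ ∑ v, ∑ u, (A v u + A u v) / 2 := by
    refine sum_le_sum fun v _ => sum_le_sum fun u _ => ?_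
    by_cases hvu : G.Adj v u
    · simp [A, hvu, hvu.symm]
    · have hvu' : ¬ G.Adj u v := fun h => hvu h.symm
      simp only [A, hvu, hvu', if_false]
      have := sq_nonneg ((G.degree v : ℝ) ^ s - (G.degree u : ℝ) ^ s)
      rw [mul_comm 2 s, pow_mul, pow_mul]
      nlinarith
  refine h.trans (h2.trans (le_of_eq ?_))
  have e1 : ∑ v, ∑ u, (A v u + A u v) / 2 = (∑ v, ∑ u, A v u + ∑ v, ∑ u, A u v) / 2 := by
    simp only [← sum_div, sum_add_distrib]
  rw [e1, sum_comm (f := fun v u => A u v)]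
  simp only [hA]
  ring

/-- For `s ≥ 1` and a graph `G` on `n` vertices with average degree
`d = 2m/n ≥ (1 − 1/(2s)) n`, we have `D_s(G) ≤ (n − d) n d^{2s}`. -/
theorem stmt_10 (s : ℕ) (hs : 1 ≤ s) (n : ℕ) (G : SimpleGraph (Fin n)) (d : ℝ)
    (hd : d = 2 * (G.edgeFinset.card : ℝ) / (n : ℝ))
    (hdense : (1 - 1 / (2 * s : ℝ)) * (n : ℝ) ≤ d) :
    (Dstar s G : ℝ) ≤ ((n : ℝ) - d) * (n : ℝ) * d ^ (2 * s) := by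
  have hd0 : 0 ≤ d := by rw [hd]; positivity
  have hsum : ∑ v, (G.degree v : ℝ) = n * d := by
    have h1 : (∑ v, (G.degree v : ℝ)) = 2 * (G.edgeFinset.card : ℝ) := by
      exact_mod_cast G.sum_degrees_eq_twice_card_edges
    rcases Nat.eq_zero_or_pos n with h0 | h0
    · subst h0; simp
    · have : (n : ℝ) ≠ 0 := by positivity
      rw [h1, hd]; field_simp
  obtain ⟨m, hm⟩ : ∃ m, 2 * s = m + 1 := ⟨2 * s - 1, by omega⟩
  have hm1 : 1 ≤ m := by omega
  have hmr : (2 * s : ℝ) = m + 1 := by exact_mod_cast hm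
  have hN : (m : ℝ) * n ≤ (m + 1) * d := by
    rw [hmr] at hdense
    have hp : (0 : ℝ) < m + 1 := by positivity
    have := mul_le_mul_of_nonneg_left hdense hp.le
    have e : ((m : ℝ) + 1) * ((1 - 1 / (m + 1)) * n) = m * n := by field_simp; ring
    linarith
  refine (aux_bound s n G).trans ?_
  rw [hm]
  calc _ ≤ ∑ v : Fin n, (((n : ℝ) - d) * d ^ (m + 1)
      + ((m + 1) * n * d ^ m - (m + 2) * d ^ (m + 1)) * ((G.degree v : ℝ) - d)) :=
        sum_le_sum fun v _ => aux_tangent _ d n (Nat.cast_nonneg _) hd0 m hm1 hN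
    _ = _ := by
      rw [sum_add_distrib, ← mul_sum, ← mul_sum, sum_sub_distrib, hsum]
      simp
      ring
end

section
/- Fix an integer s ≥ 1 and let β ∈ [1 − 1/(2s), 1]. For every sequence (G_n)_{n≥2} of finite simple graphs, where G_n has exactly n vertices and the edge density of G_n tends to β as n → ∞, one has limsup_{n→∞} D_s(G_n)/n^{2s+2} ≤ β^{2s}(1−β). Moreover, there exists such a sequence (G_n) with edge density tending to β for which D_s(G_n)/n^{2s+2} converges to β^{2s}(1−β). -/
open Finset SimpleGraph Filter
open scoped Classical

/-- The edge density of an `n`-vertex graph: `m / (n choose 2)`. -/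
noncomputable def density {n : ℕ} (G : SimpleGraph (Fin n)) : ℝ :=
  (G.edgeFinset.card : ℝ) / (n.choose 2 : ℝ)

/-- AM-GM type polynomial inequality. -/
lemma aux_amgm (t : ℝ) (ht : 0 ≤ t) (k : ℕ) : 0 ≤ (k : ℝ) * t ^ (k + 1) - (k + 1) * t ^ k + 1 := by
  induction k with
  | zero => simp
  | succ k ih =>
    have h1 : 0 ≤ (t - 1) * (t ^ (k + 1) - 1) := by
      rcases le_total t 1 with h | h
      · have := pow_le_one₀ (n := k + 1) ht h
        nlinarith
      · have := one_le_pow₀ (n := k + 1) h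
        nlinarith
    have h2 := mul_nonneg ht ih
    push_cast
    have : ((k : ℝ) + 1) * t ^ (k + 1 + 1) - (k + 1 + 1) * t ^ (k + 1) + 1
      = t * ((k : ℝ) * t ^ (k + 1) - (k + 1) * t ^ k + 1) + (t - 1) * (t ^ (k + 1) - 1) := by ring
    linarith

/-- Tangent line inequality. -/
lemma aux_tangent_s11 (k : ℕ) (β x : ℝ) (hβ : 0 < β) (hk : (k : ℝ) ≤ (k + 1) * β) (hx : 0 ≤ x) :
    x ^ (k + 1) * (1 - x) ≤ β ^ (k + 1) * (1 - β)
      + ((k + 1) * β ^ k - (k + 2) * β ^ (k + 1)) * (x - β) := by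
  obtain ⟨t, rfl⟩ : ∃ t, x = t * β := ⟨x / β, by field_simp⟩
  have ht : 0 ≤ t := by
    by_contra h
    push Not at h
    nlinarith
  have h1 := aux_amgm t ht k
  have h2 : 0 ≤ t ^ (k + 2) - 1 - (k + 2) * (t - 1) := by
    have := one_add_mul_le_pow (a := t - 1) (by linarith) (k + 2)
    push_cast at this
    have e : 1 + (t - 1) = t := by ring
    rw [e] at this
    linarith
  have h3 := mul_nonneg ht h1
  have h4 := mul_nonneg (sub_nonneg.2 hk) h2
  have h5 : 0 ≤ β ^ (k + 1) * (((k : ℝ) + 1) *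
      ((1 - β) + ((k + 1) - (k + 2) * β) * (t - 1) - t ^ (k + 1) + β * t ^ (k + 2))) := by
    apply mul_nonneg (by positivity)
    have : ((k : ℝ) + 1) *
      ((1 - β) + ((k + 1) - (k + 2) * β) * (t - 1) - t ^ (k + 1) + β * t ^ (k + 2))
      = t * ((k : ℝ) * t ^ (k + 1) - (k + 1) * t ^ k + 1)
        + ((k + 1) * β - k) * (t ^ (k + 2) - 1 - (k + 2) * (t - 1)) := by ring
    linarith
  have h6 : β ^ (k + 1) * (((k : ℝ) + 1) *
      ((1 - β) + ((k + 1) - (k + 2) * β) * (t - 1) - t ^ (k + 1) + β * t ^ (k + 2)))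
      = ((k : ℝ) + 1) * (β ^ (k + 1) * (1 - β)
      + ((k + 1) * β ^ k - (k + 2) * β ^ (k + 1)) * (t * β - β)
      - (t * β) ^ (k + 1) * (1 - t * β)) := by ring
  rw [h6] at h5
  have := nonneg_of_mul_nonneg_right h5 (by positivity)
  linarith

/-- Homomorphism version of the set being counted. -/
noncomputable def Hset (s : ℕ) {n : ℕ} (G : SimpleGraph (Fin n)) :
    Finset ((Fin s → Fin n) × Fin n × Fin n × (Fin s → Fin n)) :=
  Finset.univ.filter fun p =>
    (∀ i, G.Adj p.2.1 (p.1 i)) ∧ (∀ j, G.Adj p.2.2.1 (p.2.2.2 j)) ∧ ¬ G.Adj p.2.1 p.2.2.1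

lemma card_star (s : ℕ) {n : ℕ} (G : SimpleGraph (Fin n)) (v : Fin n) :
    (∑ a : Fin s → Fin n, if (∀ i, G.Adj v (a i)) then (1 : ℝ) else 0) = (G.degree v : ℝ) ^ s := by
  rw [Finset.sum_boole]
  have : (Finset.univ.filter fun a : Fin s → Fin n => ∀ i, G.Adj v (a i))
      = Fintype.piFinset (fun _ => G.neighborFinset v) := by
    ext a; simp
  rw [this, Fintype.card_piFinset_const, card_neighborFinset_eq_degree]
  push_cast
  rfl

lemma card_Hset (s : ℕ) {n : ℕ} (G : SimpleGraph (Fin n)) :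
    ((Hset s G).card : ℝ) =
      ∑ v, ∑ u, (if ¬ G.Adj v u then (1 : ℝ) else 0) * ((G.degree v : ℝ) ^ s * (G.degree u : ℝ) ^ s) := by
  unfold Hset
  rw [← Finset.sum_boole]
  simp_rw [← card_star s G]
  rw [Fintype.sum_prod_type, Finset.sum_comm' (t' := Finset.univ) (s' := fun _ => Finset.univ) (by simp)]
  rw [Fintype.sum_prod_type]
  refine Finset.sum_congr rfl fun v _ => ?_
  rw [Fintype.sum_prod_type]
  refine Finset.sum_congr rfl fun u _ => ?_
  rw [Finset.sum_mul_sum, Finset.mul_sum, Finset.sum_comm]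
  refine Finset.sum_congr rfl fun a _ => ?_
  rw [Finset.mul_sum]
  refine Finset.sum_congr rfl fun b _ => ?_
  dsimp only
  split_ifs <;> simp_all

lemma Dstar_le_Hset (s : ℕ) {n : ℕ} (G : SimpleGraph (Fin n)) : Dstar s G ≤ (Hset s G).card := by
  unfold Dstar Hset
  apply Finset.card_le_card
  intro p hp
  simp only [Finset.mem_filter] at hp ⊢
  exact ⟨hp.1, hp.2.2⟩

lemma nonadj_sum {n : ℕ} (G : SimpleGraph (Fin n)) (v : Fin n) :
    (∑ u, (if ¬ G.Adj v u then (1 : ℝ) else 0)) = n - G.degree v := by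
  have h : (∑ u, (if G.Adj v u then (1 : ℝ) else 0)) = G.degree v := by
    rw [Finset.sum_boole, ← card_neighborFinset_eq_degree]
    congr 2
    ext u; simp
  have : ∀ u, (if ¬ G.Adj v u then (1 : ℝ) else 0) = 1 - (if G.Adj v u then (1 : ℝ) else 0) := by
    intro u; split_ifs <;> simp_all
  simp_rw [this]
  rw [Finset.sum_sub_distrib, h]
  simp

lemma Hset_le (s : ℕ) {n : ℕ} (G : SimpleGraph (Fin n)) :
    ((Hset s G).card : ℝ) ≤ ∑ v, (G.degree v : ℝ) ^ (2 * s) * (n - G.degree v) := by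
  rw [card_Hset]
  set N : Fin n → Fin n → ℝ := fun v u => if ¬ G.Adj v u then (1 : ℝ) else 0 with hN
  have e1 : ∑ v, (G.degree v : ℝ) ^ (2 * s) * (n - G.degree v)
      = ∑ v, ∑ u, N v u * (G.degree v : ℝ) ^ (2 * s) := by
    refine Finset.sum_congr rfl fun v _ => ?_
    rw [← Finset.sum_mul, hN, nonadj_sum, mul_comm]
  have e2 : ∑ v, ∑ u, N v u * (G.degree v : ℝ) ^ (2 * s)
      = ∑ v, ∑ u, N v u * (G.degree u : ℝ) ^ (2 * s) := by
    rw [Finset.sum_comm]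
    refine Finset.sum_congr rfl fun v _ => Finset.sum_congr rfl fun u _ => ?_
    simp only [hN, G.adj_comm]
  have e3 : ∑ v, ∑ u, N v u * ((G.degree v : ℝ) ^ s * (G.degree u : ℝ) ^ s)
      ≤ ∑ v, ∑ u, (N v u * (G.degree v : ℝ) ^ (2 * s) + N v u * (G.degree u : ℝ) ^ (2 * s)) / 2 := by
    refine Finset.sum_le_sum fun v _ => Finset.sum_le_sum fun u _ => ?_
    have hn : 0 ≤ N v u := by simp only [hN]; split_ifs <;> simp
    have := mul_nonneg hn (sq_nonneg ((G.degree v : ℝ) ^ s - (G.degree u : ℝ) ^ s))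
    rw [mul_comm 2 s, pow_mul, pow_mul]
    nlinarith
  refine e3.trans (le_of_eq ?_)
  simp_rw [← Finset.sum_div, Finset.sum_add_distrib]
  rw [← e2, e1]
  ring

/-- Normalised average degree. -/
noncomputable def avg {n : ℕ} (G : SimpleGraph (Fin n)) : ℝ :=
  (∑ v, (G.degree v : ℝ)) / (n : ℝ) ^ 2

lemma upper (s : ℕ) (hs : 1 ≤ s) (β : ℝ) (hβl : 1 - 1 / (2 * s : ℝ) ≤ β) {n : ℕ} (hn : 1 ≤ n)
    (G : SimpleGraph (Fin n)) :
    (Dstar s G : ℝ) / (n : ℝ) ^ (2 * s + 2) ≤ β ^ (2 * s) * (1 - β)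
      + (2 * s * β ^ (2 * s - 1) - (2 * s + 1) * β ^ (2 * s)) * (avg G - β) := by
  obtain ⟨k, hk⟩ : ∃ k, 2 * s = k + 1 := ⟨2 * s - 1, by omega⟩
  have hkr : (2 * s : ℝ) = k + 1 := by exact_mod_cast hk
  have hk1 : (1 : ℝ) ≤ k := by
    have : 1 ≤ k := by omega
    exact_mod_cast this
  have hnr : (0 : ℝ) < n := by exact_mod_cast hn
  have h1 : (Dstar s G : ℝ) ≤ ∑ v, (G.degree v : ℝ) ^ (2 * s) * (n - G.degree v) :=
    le_trans (by exact_mod_cast Dstar_le_Hset s G) (Hset_le s G)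
  rw [hkr] at hβl
  have hkβ : (k : ℝ) ≤ (k + 1) * β := by
    have := mul_le_mul_of_nonneg_left hβl (by positivity : (0 : ℝ) ≤ k + 1)
    have e : ((k : ℝ) + 1) * (1 - 1 / (k + 1)) = k := by field_simp; ring
    linarith
  have hβ : 0 < β := by
    by_contra h
    push Not at h
    nlinarith
  rw [hk] at h1 ⊢
  rw [hkr]
  simp only [Nat.add_sub_cancel]
  have e : ∀ v, (G.degree v : ℝ) ^ (k + 1) * (n - G.degree v) ≤ (n : ℝ) ^ (k + 2) *
      (β ^ (k + 1) * (1 - β)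
      + ((k + 1) * β ^ k - (k + 2) * β ^ (k + 1)) * (G.degree v / n - β)) := by
    intro v
    have := aux_tangent_s11 k β (G.degree v / n) hβ hkβ (by positivity)
    have := mul_le_mul_of_nonneg_left this (by positivity : (0 : ℝ) ≤ (n : ℝ) ^ (k + 2))
    refine le_trans (le_of_eq ?_) this
    rw [div_pow]
    field_simp
    ring
  have h2 := h1.trans (Finset.sum_le_sum fun v _ => e v)
  have hlin : ∀ A c : ℝ, ∑ v, (A + c * ((G.degree v : ℝ) / n - β))
      = n * A + c * ((∑ v, (G.degree v : ℝ)) / n - n * β) := by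
    intro A c
    rw [Finset.sum_add_distrib, ← Finset.mul_sum, Finset.sum_sub_distrib, ← Finset.sum_div]
    simp only [Finset.sum_const, Finset.card_univ, Fintype.card_fin, nsmul_eq_mul]
  rw [← Finset.mul_sum, hlin] at h2
  rw [div_le_iff₀ (by positivity)]
  refine h2.trans (le_of_eq ?_)
  unfold avg
  field_simp
  ring

lemma density_avg {n : ℕ} (hn : 2 ≤ n) (G : SimpleGraph (Fin n)) :
    avg G = density G * (1 - 1 / (n : ℝ)) := by
  have h := G.sum_degrees_eq_twice_card_edges
  have h' : (∑ v, (G.degree v : ℝ)) = 2 * (G.edgeFinset.card : ℝ) := by exact_mod_cast h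
  unfold avg density
  rw [h', Nat.cast_choose_two]
  have h2 : (2 : ℝ) ≤ n := by exact_mod_cast hn
  have h3 : (n : ℝ) - 1 ≠ 0 := by linarith
  field_simp

lemma tendsto_inv_nat : Tendsto (fun n : ℕ => 1 - 1 / (n : ℝ)) atTop (nhds 1) := by
  have := (tendsto_const_nhds (x := (1 : ℝ))).sub tendsto_one_div_atTop_nhds_zero_nat
  simpa using this

/-- Cayley sum graph. -/
def sumG (n m : ℕ) : SimpleGraph (Fin n) where
  Adj i j := i ≠ j ∧ m ≤ (i.val + j.val) % n
  symm := ⟨fun i j h => ⟨h.1.symm, by rw [add_comm]; exact h.2⟩⟩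
  loopless := ⟨fun i h => h.1 rfl⟩

lemma sum_count (n m : ℕ) (hm : m ≤ n) (v : Fin n) :
    (Finset.univ.filter fun u : Fin n => (v.val + u.val) % n < m).card = m := by
  have : NeZero n := ⟨by have := v.2; omega⟩
  have h1 : (Finset.univ.filter fun u : Fin n => (v.val + u.val) % n < m).card
      = (Finset.univ.filter fun u : Fin n => u.val < m).card := by
    refine Finset.card_bij (fun u _ => v + u) ?_ ?_ ?_
    · intro u hu
      simpa [Fin.val_add] using hu
    · intro a _ b _ h
      exact add_left_cancel h
    · intro b hb
      refine ⟨b - v, ?_, by simp⟩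
      have : v + (b - v) = b := by simp
      rw [Finset.mem_filter, ← Fin.val_add, this]
      simpa using hb
  rw [h1, Fin.card_filter_val_lt]
  omega

lemma sumG_deg (n m : ℕ) (hm : m ≤ n) (v : Fin n) :
    n ≤ (sumG n m).degree v + m + 1 ∧ (sumG n m).degree v + m ≤ n := by
  have h1 := sum_count n m hm v
  have h2 := Finset.card_filter_add_card_filter_not (s := (Finset.univ : Finset (Fin n)))
    (fun u : Fin n => (v.val + u.val) % n < m)
  rw [h1, Finset.card_univ, Fintype.card_fin] at h2
  have h3 : (sumG n m).neighborFinset v =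
      (Finset.univ.filter fun u : Fin n => ¬ (v.val + u.val) % n < m).erase v := by
    ext u
    rw [mem_neighborFinset]
    simp [sumG, eq_comm]
  rw [← card_neighborFinset_eq_degree, h3]
  have h4 := Finset.pred_card_le_card_erase (s := Finset.univ.filter fun u : Fin n => ¬ (v.val + u.val) % n < m) (a := v)
  have h5 := Finset.card_erase_le (s := Finset.univ.filter fun u : Fin n => ¬ (v.val + u.val) % n < m) (a := v)
  omega

lemma inj_count (s n : ℕ) :
    n.descFactorial (2 * s + 2) ≤
    ((Finset.univ : Finset ((Fin s → Fin n) × Fin n × Fin n × (Fin s → Fin n))).filter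
      fun p => (Function.Injective fun i : Fin s ⊕ Fin 2 ⊕ Fin s =>
          Sum.elim p.1
            (Sum.elim (fun j : Fin 2 => if j = 0 then p.2.1 else p.2.2.1) p.2.2.2) i)).card := by
  have h : Fintype.card ((Fin s ⊕ Fin 2 ⊕ Fin s) ↪ Fin n) = n.descFactorial (2 * s + 2) := by
    rw [Fintype.card_embedding_eq]
    simp only [Fintype.card_fin, Fintype.card_sum]
    congr 1; omega
  rw [← h, ← Finset.card_univ]
  have key : ∀ e : (Fin s ⊕ Fin 2 ⊕ Fin s) ↪ Fin n,
      (fun i : Fin s ⊕ Fin 2 ⊕ Fin s =>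
          Sum.elim (fun i => e (Sum.inl i))
            (Sum.elim (fun j : Fin 2 => if j = 0 then e (Sum.inr (Sum.inl 0)) else e (Sum.inr (Sum.inl 1)))
              (fun i => e (Sum.inr (Sum.inr i)))) i) = e := by
    intro e
    funext i
    rcases i with i | j | i
    · rfl
    · fin_cases j <;> rfl
    · rfl
  refine Finset.card_le_card_of_injOn (fun e => (fun i => e (Sum.inl i), e (Sum.inr (Sum.inl 0)),
    e (Sum.inr (Sum.inl 1)), fun i => e (Sum.inr (Sum.inr i)))) ?_ ?_
  · intro e _
    simp only [Finset.coe_filter, Finset.mem_univ, true_and, Set.mem_ofPred_eq]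
    rw [key e]
    exact e.injective
  · intro e _ e' _ hee
    simp only [Prod.mk.injEq] at hee
    apply DFunLike.coe_injective
    rw [← key e, ← key e', hee.1, hee.2.1, hee.2.2.1, hee.2.2.2]

lemma Hset_le_Dstar (s : ℕ) {n : ℕ} (G : SimpleGraph (Fin n)) :
    (Hset s G).card + n.descFactorial (2 * s + 2) ≤ Dstar s G + n ^ (2 * s + 2) := by
  have h1 := inj_count s n
  set A := ((Finset.univ : Finset ((Fin s → Fin n) × Fin n × Fin n × (Fin s → Fin n))).filter
      fun p => (Function.Injective fun i : Fin s ⊕ Fin 2 ⊕ Fin s =>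
          Sum.elim p.1
            (Sum.elim (fun j : Fin 2 => if j = 0 then p.2.1 else p.2.2.1) p.2.2.2) i)) with hA
  have h2 : Dstar s G = (A ∩ Hset s G).card := by
    unfold Dstar Hset
    rw [hA, ← Finset.filter_and]
  have h3 := Finset.card_union_add_card_inter A (Hset s G)
  have h4 : (A ∪ Hset s G).card ≤ n ^ (2 * s + 2) := by
    refine (Finset.card_le_univ _).trans (le_of_eq ?_)
    simp only [Fintype.card_prod, Fintype.card_fin, Fintype.card_pi, Finset.prod_const, Finset.card_univ]
    ring
  omega

lemma lower (s n m : ℕ) (hn : 2 * s + 2 ≤ n) (hm : m + 1 ≤ n) :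
    ((m : ℝ) / n) * (1 - (m : ℝ) / n - 1 / n) ^ (2 * s)
      + (1 - (2 * s + 1) * (1 / (n : ℝ))) ^ (2 * s + 2) - 1
      ≤ (Dstar s (sumG n m) : ℝ) / (n : ℝ) ^ (2 * s + 2) := by
  have hn0 : (0 : ℝ) < n := by
    have : 0 < n := by omega
    exact_mod_cast this
  have hm' : (m : ℝ) + 1 ≤ n := by exact_mod_cast hm
  have h1 : ((Hset s (sumG n m)).card : ℝ) + n.descFactorial (2 * s + 2)
      ≤ Dstar s (sumG n m) + (n : ℝ) ^ (2 * s + 2) := by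
    exact_mod_cast Hset_le_Dstar s (sumG n m)
  have h2 : ((n : ℝ) - (2 * s + 1)) ^ (2 * s + 2) ≤ n.descFactorial (2 * s + 2) := by
    have := Nat.pow_sub_le_descFactorial n (2 * s + 2)
    have h : ((n + 1 - (2 * s + 2) : ℕ) : ℝ) ^ (2 * s + 2) ≤ n.descFactorial (2 * s + 2) := by
      exact_mod_cast this
    have e : ((n + 1 - (2 * s + 2) : ℕ) : ℝ) = (n : ℝ) - (2 * s + 1) := by
      rw [Nat.cast_sub (by omega)]
      push_cast; ring
    rwa [e] at h
  have hdeg : ∀ v, (n : ℝ) - m - 1 ≤ (sumG n m).degree v ∧ ((sumG n m).degree v : ℝ) ≤ n - m := by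
    intro v
    obtain ⟨a, b⟩ := sumG_deg n m (by omega) v
    have a' : (n : ℝ) ≤ (sumG n m).degree v + m + 1 := by exact_mod_cast a
    have b' : ((sumG n m).degree v : ℝ) + m ≤ n := by exact_mod_cast b
    constructor <;> linarith
  have hnm : (0 : ℝ) ≤ n - m - 1 := by linarith
  have h3 : (n : ℝ) * m * ((n : ℝ) - m - 1) ^ (2 * s) ≤ (Hset s (sumG n m)).card := by
    rw [card_Hset]
    have : ∀ v ∈ (Finset.univ : Finset (Fin n)), (m : ℝ) * ((n : ℝ) - m - 1) ^ (2 * s) ≤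
        ∑ u, (if ¬ (sumG n m).Adj v u then (1 : ℝ) else 0) *
          (((sumG n m).degree v : ℝ) ^ s * ((sumG n m).degree u : ℝ) ^ s) := by
      intro v _
      have hstep : ∑ u, (if ¬ (sumG n m).Adj v u then (1 : ℝ) else 0) * ((n : ℝ) - m - 1) ^ (2 * s) ≤
        ∑ u, (if ¬ (sumG n m).Adj v u then (1 : ℝ) else 0) *
          (((sumG n m).degree v : ℝ) ^ s * ((sumG n m).degree u : ℝ) ^ s) := by
        refine Finset.sum_le_sum fun u _ => ?_
        apply mul_le_mul_of_nonneg_left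
        · rw [two_mul, pow_add]
          have a := pow_le_pow_left₀ hnm (hdeg v).1 s
          have b := pow_le_pow_left₀ hnm (hdeg u).1 s
          exact mul_le_mul a b (by positivity) (by positivity)
        · split_ifs <;> simp
      refine le_trans ?_ hstep
      rw [← Finset.sum_mul, nonadj_sum]
      apply mul_le_mul_of_nonneg_right
      · linarith [(hdeg v).2]
      · positivity
    have := Finset.card_nsmul_le_sum _ _ _ this
    simp only [Finset.card_univ, Fintype.card_fin, nsmul_eq_mul] at this
    rw [mul_assoc]
    exact this
  rw [le_div_iff₀ (by positivity)]
  have e1 : (1 - (m : ℝ) / n - 1 / n) = ((n : ℝ) - m - 1) / n := by field_simp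
  have e2 : (1 - (2 * s + 1) * (1 / (n : ℝ))) = ((n : ℝ) - (2 * s + 1)) / n := by field_simp
  rw [e1, e2, div_pow, div_pow]
  have e3 : ((m : ℝ) / n * (((n : ℝ) - m - 1) ^ (2 * s) / (n : ℝ) ^ (2 * s)) +
      ((n : ℝ) - (2 * s + 1)) ^ (2 * s + 2) / (n : ℝ) ^ (2 * s + 2) - 1) * (n : ℝ) ^ (2 * s + 2)
      = (n : ℝ) * m * ((n : ℝ) - m - 1) ^ (2 * s) + ((n : ℝ) - (2 * s + 1)) ^ (2 * s + 2)
        - (n : ℝ) ^ (2 * s + 2) := by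
    rw [sub_mul, add_mul, div_mul_cancel₀ _ (by positivity)]
    field_simp
    ring
  rw [e3]
  linarith

lemma avg_bounds (n m : ℕ) (hn : 1 ≤ n) (hm : m ≤ n) :
    1 - (m : ℝ) / n - 1 / n ≤ avg (sumG n m) ∧ avg (sumG n m) ≤ 1 - (m : ℝ) / n := by
  have hn0 : (0 : ℝ) < n := by exact_mod_cast hn
  have hdeg : ∀ v, (n : ℝ) - m - 1 ≤ (sumG n m).degree v ∧ ((sumG n m).degree v : ℝ) ≤ n - m := by
    intro v
    obtain ⟨a, b⟩ := sumG_deg n m hm v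
    have a' : (n : ℝ) ≤ (sumG n m).degree v + m + 1 := by exact_mod_cast a
    have b' : ((sumG n m).degree v : ℝ) + m ≤ n := by exact_mod_cast b
    constructor <;> linarith
  have h1 := Finset.card_nsmul_le_sum Finset.univ (fun v => ((sumG n m).degree v : ℝ)) _
    (fun v _ => (hdeg v).1)
  have h2 := Finset.sum_le_card_nsmul Finset.univ (fun v => ((sumG n m).degree v : ℝ)) _
    (fun v _ => (hdeg v).2)
  simp only [Finset.card_univ, Fintype.card_fin, nsmul_eq_mul] at h1 h2
  unfold avg
  constructor
  · rw [le_div_iff₀ (by positivity)]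
    refine le_trans (le_of_eq ?_) h1
    field_simp
  · rw [div_le_iff₀ (by positivity)]
    refine le_trans h2 (le_of_eq ?_)
    field_simp

lemma upper_tendsto (s : ℕ) (β : ℝ) (G : (n : ℕ) → SimpleGraph (Fin n))
    (h : Tendsto (fun n => avg (G n)) atTop (nhds β)) :
    Tendsto (fun n => β ^ (2 * s) * (1 - β)
      + (2 * s * β ^ (2 * s - 1) - (2 * s + 1) * β ^ (2 * s)) * (avg (G n) - β)) atTop
      (nhds (β ^ (2 * s) * (1 - β))) := by
  have := ((h.sub_const β).const_mul (2 * s * β ^ (2 * s - 1) - (2 * s + 1) * β ^ (2 * s))).const_add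
    (β ^ (2 * s) * (1 - β))
  simpa using this

/-- `I(D(s), β) = β^{2s}(1−β)` for `β ∈ [1 − 1/(2s), 1]`: every sequence of graphs with
edge density tending to `β` has `limsup D_s(G_n)/n^{2s+2} ≤ β^{2s}(1−β)`, and this bound
is attained by some sequence. -/
theorem stmt_11 (s : ℕ) (hs : 1 ≤ s) (β : ℝ)
    (hβl : 1 - 1 / (2 * s : ℝ) ≤ β) (hβu : β ≤ 1) :
    (∀ G : (n : ℕ) → SimpleGraph (Fin n),
      Tendsto (fun n => density (G n)) atTop (nhds β) →
      limsup (fun n => (Dstar s (G n) : ℝ) / (n : ℝ) ^ (2 * s + 2)) atTop ≤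
        β ^ (2 * s) * (1 - β)) ∧
    (∃ G : (n : ℕ) → SimpleGraph (Fin n),
      Tendsto (fun n => density (G n)) atTop (nhds β) ∧
      Tendsto (fun n => (Dstar s (G n) : ℝ) / (n : ℝ) ^ (2 * s + 2)) atTop
        (nhds (β ^ (2 * s) * (1 - β)))) := by
  constructor
  · intro G hG
    have havg : Tendsto (fun n => avg (G n)) atTop (nhds β) := by
      have h := hG.mul tendsto_inv_nat
      rw [mul_one] at h
      refine h.congr' ?_
      filter_upwards [eventually_ge_atTop 2] with n hn
      exact (density_avg hn (G n)).symm
    have ht := upper_tendsto s β G havg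
    rw [← ht.limsup_eq]
    refine limsup_le_limsup ?_ ?_ ht.isBoundedUnder_le
    · filter_upwards [eventually_ge_atTop 1] with n hn
      exact upper s hs β hβl hn (G n)
    · refine IsBoundedUnder.isCoboundedUnder_le ⟨0, ?_⟩
      simp only [eventually_map]
      exact Eventually.of_forall fun n => by positivity
  · have hs' : (1 : ℝ) ≤ s := by exact_mod_cast hs
    have hβ : 1 / 2 ≤ β := by
      have : 1 / (2 * s : ℝ) ≤ 1 / 2 := by
        apply one_div_le_one_div_of_le <;> linarith
      linarith
    set m : ℕ → ℕ := fun n => ⌊(1 - β) * (n : ℝ)⌋₊ with hm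
    have hmt : Tendsto (fun n : ℕ => (m n : ℝ) / n) atTop (nhds (1 - β)) :=
      (tendsto_nat_floor_mul_div_atTop (R := ℝ) (by linarith : 0 ≤ 1 - β)).comp
        tendsto_natCast_atTop_atTop
    have hmle : ∀ n, 2 ≤ n → m n + 1 ≤ n := by
      intro n hn
      have h1 : (m n : ℝ) ≤ (1 - β) * n := Nat.floor_le (mul_nonneg (by linarith) (by positivity))
      have h2 : (2 : ℝ) ≤ n := by exact_mod_cast hn
      have h3 : (m n : ℝ) + 1 ≤ n := by nlinarith
      exact_mod_cast h3
    have hinv : Tendsto (fun n : ℕ => 1 / (n : ℝ)) atTop (nhds 0) :=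
      tendsto_one_div_atTop_nhds_zero_nat
    have hA : Tendsto (fun n : ℕ => 1 - (m n : ℝ) / n) atTop (nhds β) := by
      have := hmt.const_sub 1
      simpa using this
    have hB : Tendsto (fun n : ℕ => 1 - (m n : ℝ) / n - 1 / n) atTop (nhds β) := by
      have := hA.sub hinv
      simpa using this
    have havg : Tendsto (fun n => avg (sumG n (m n))) atTop (nhds β) := by
      refine tendsto_of_tendsto_of_tendsto_of_le_of_le' hB hA ?_ ?_
      · filter_upwards [eventually_ge_atTop 2] with n hn
        exact (avg_bounds n (m n) (by omega) (by have := hmle n hn; omega)).1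
      · filter_upwards [eventually_ge_atTop 2] with n hn
        exact (avg_bounds n (m n) (by omega) (by have := hmle n hn; omega)).2
    refine ⟨fun n => sumG n (m n), ?_, ?_⟩
    · have h := havg.div tendsto_inv_nat one_ne_zero
      rw [div_one] at h
      refine h.congr' ?_
      filter_upwards [eventually_ge_atTop 2] with n hn
      have h2 : (2 : ℝ) ≤ n := by exact_mod_cast hn
      have h3 : 1 - 1 / (n : ℝ) ≠ 0 := by
        have : 1 / (n : ℝ) ≤ 1 / 2 := by
          apply one_div_le_one_div_of_le <;> linarith
        linarith
      simp only [Pi.div_apply]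
      rw [density_avg hn, mul_div_cancel_right₀ _ h3]
    · have hL : Tendsto (fun n : ℕ => ((m n : ℝ) / n) * (1 - (m n : ℝ) / n - 1 / n) ^ (2 * s)
          + (1 - (2 * s + 1) * (1 / (n : ℝ))) ^ (2 * s + 2) - 1) atTop
          (nhds (β ^ (2 * s) * (1 - β))) := by
        have h := ((hmt.mul (hB.pow (2 * s))).add
          (((hinv.const_mul (2 * s + 1 : ℝ)).const_sub 1).pow (2 * s + 2))).sub_const 1
        have e : (1 - β) * β ^ (2 * s) + (1 - (2 * s + 1 : ℝ) * 0) ^ (2 * s + 2) - 1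
          = β ^ (2 * s) * (1 - β) := by
          rw [mul_zero, sub_zero, one_pow]; ring
        rw [e] at h
        exact h
      refine tendsto_of_tendsto_of_tendsto_of_le_of_le' hL
        (upper_tendsto s β (fun n => sumG n (m n)) havg) ?_ ?_
      · filter_upwards [eventually_ge_atTop (2 * s + 2)] with n hn
        exact lower s n (m n) hn (hmle n (by omega))
      · filter_upwards [eventually_ge_atTop 1] with n hn
        exact upper s hs β hβl hn _
end
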